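/- Suppose ℓ = 2. Then for every integer j ≥ 1, the alternating sum of the cone cohomology dimensions telescopes: Σ_{k=0}^{j} (−1)^{j−k} b^φ_k = b_j − r_{j−1}. -/

import Mathlib

open LinearMap Module

noncomputable section

namespace ConeMorse

variable (A : ℤ → Type) [∀ i, AddCommGroup (A i)] [∀ i, Module ℝ (A i)]

/-- Transport along an equality of indices. -/
def lcast {m k : ℤ} (h : m = k) : A m →ₗ[ℝ] A k where
  toFun x := h ▸ x
  map_add' x y := by subst h; rfl
  map_smul' c x := by subst h; rfl

variable (d : ∀ i, A i →ₗ[ℝ] A (i + 1))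

/-- Cocycles in degree `i`. -/
def cocycles (i : ℤ) : Submodule ℝ (A i) := ker (d i)

/-- Coboundaries in degree `i`: the image of `d : A^{i-1} → A^i`. -/
def cobound (i : ℤ) : Submodule ℝ (A i) :=
  range ((lcast A (show i - 1 + 1 = i by ring)).comp (d (i - 1)))

/-- Cohomology in degree `i`: cocycles modulo coboundaries. -/
abbrev Hcoh (i : ℤ) :=
  cocycles A d i ⧸ Submodule.comap (cocycles A d i).subtype (cobound A d i)

section OneComplex

variable (ℓ : ℤ) (φ : ∀ i, A i →ₗ[ℝ] A (i + ℓ))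

/-- The cone differential `∂_C (a, b) = (∂ a + φ b, (−1)^{ℓ−1} ∂ b)` on
`Cone^i(φ) = A^i ⊕ A^{i−ℓ+1}`. -/
def coneD (i : ℤ) : (A i × A (i - ℓ + 1)) →ₗ[ℝ] (A (i + 1) × A (i + 1 - ℓ + 1)) :=
  LinearMap.prod
    ((d i).comp (LinearMap.fst ℝ (A i) (A (i - ℓ + 1))) +
      (lcast A (show i - ℓ + 1 + ℓ = i + 1 by ring)).comp
        ((φ (i - ℓ + 1)).comp (LinearMap.snd ℝ (A i) (A (i - ℓ + 1)))))
    (((-1 : ℝ) ^ (ℓ - 1)) •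
      ((lcast A (show i - ℓ + 1 + 1 = i + 1 - ℓ + 1 by ring)).comp
        ((d (i - ℓ + 1)).comp (LinearMap.snd ℝ (A i) (A (i - ℓ + 1))))))

variable [∀ i, FiniteDimensional ℝ (A i)]

/-- `m_k`: the dimension of the cochain group in degree `k`. -/
def mnum (k : ℤ) : ℕ := finrank ℝ (A k)

/-- `b_k`: the dimension of the cohomology in degree `k`. -/
def bnum (k : ℤ) : ℕ := finrank ℝ (Hcoh A d k)

/-- `v_k`: the rank of `φ : A^k → A^{k+ℓ}`. -/
def vnum (k : ℤ) : ℕ := finrank ℝ (range (φ k))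

/-- `r_k`: the rank of the induced map `[φ] : H^k → H^{k+ℓ}`, computed as the dimension of
`φ(Z^k)/(φ(Z^k) ∩ B^{k+ℓ})`. -/
def rnum (k : ℤ) : ℕ :=
  finrank ℝ ((Submodule.map (φ k) (cocycles A d k)) ⧸
    Submodule.comap (Submodule.map (φ k) (cocycles A d k)).subtype (cobound A d (k + ℓ)))

/-- `b^φ_k`: the dimension of the cone cohomology in degree `k`. -/
def bphi (k : ℤ) : ℕ :=
  finrank ℝ (Hcoh (fun i => A i × A (i - ℓ + 1)) (coneD A d ℓ φ) k)

end OneComplex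

end ConeMorse

open ConeMorse

namespace ConeMorse

section Helpers

variable (A : ℤ → Type) [∀ i, AddCommGroup (A i)] [∀ i, Module ℝ (A i)]
variable (d : ∀ i, A i →ₗ[ℝ] A (i + 1))

theorem lcast_rfl {m : ℤ} (h : m = m) : lcast A h = LinearMap.id := rfl

theorem lcast_lcast {m k p : ℤ} (h : m = k) (h' : k = p) (x : A m) :
    lcast A h' (lcast A h x) = lcast A (h.trans h') x := by
  subst h; subst h'; rfl

theorem fam_lcast (ℓ : ℤ) (φ : ∀ i, A i →ₗ[ℝ] A (i + ℓ)) {m k : ℤ} (h : m = k) (x : A m) :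
    φ k (lcast A h x) = lcast A (show m + ℓ = k + ℓ by rw [h]) (φ m x) := by
  subst h; rfl

theorem lcast_inj {m k : ℤ} (h : m = k) : Function.Injective (lcast A h) := by
  subst h; exact fun _ _ h => h

theorem rank_lcast {m k : ℤ} (h : m = k) {V : Type} [AddCommGroup V] [Module ℝ V]
    (f : V →ₗ[ℝ] A m) : finrank ℝ (range ((lcast A h).comp f)) = finrank ℝ (range f) := by
  subst h; rfl

theorem finrank_quot_sup {V : Type} [AddCommGroup V] [Module ℝ V] [FiniteDimensional ℝ V]
    (P Q : Submodule ℝ V) :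
    finrank ℝ (P ⧸ Submodule.comap P.subtype Q) + finrank ℝ Q = finrank ℝ (Q ⊔ P : Submodule ℝ V) := by
  have h1 := Submodule.finrank_quotient_add_finrank (Submodule.comap P.subtype Q)
  have h2 : finrank ℝ (Submodule.comap P.subtype Q) = finrank ℝ (Q ⊓ P : Submodule ℝ V) := by
    rw [inf_comm, ← Submodule.map_comap_subtype]
    exact (LinearEquiv.finrank_eq (Submodule.equivMapOfInjective _ P.injective_subtype _))
  have h3 := Submodule.finrank_sup_add_finrank_inf_eq Q P
  omega

theorem hcoh_dim [∀ i, FiniteDimensional ℝ (A i)]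
    (hd : ∀ i, (d (i + 1)).comp (d i) = 0) (k : ℤ) :
    finrank ℝ (Hcoh A d k) + finrank ℝ (range (d k)) + finrank ℝ (range (d (k - 1)))
      = finrank ℝ (A k) := by
  have h1 := finrank_quot_sup (cocycles A d k) (cobound A d k)
  have h2 : cobound A d k ≤ cocycles A d k := by
    rintro _ ⟨x, rfl⟩
    have : d (k - 1 + 1) (d (k - 1) x) = 0 := congrArg (fun f => f x) (hd (k - 1))
    change d k _ = 0
    rw [comp_apply, fam_lcast A 1 d, this, map_zero]
  rw [sup_eq_right.mpr h2] at h1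
  change finrank ℝ (Hcoh A d k) + _ = _ at h1
  have h3 : finrank ℝ (cobound A d k) = finrank ℝ (range (d (k - 1))) := rank_lcast A _ _
  have h4 := LinearMap.finrank_range_add_finrank_ker (d k)
  have h5 : finrank ℝ (cocycles A d k) = finrank ℝ (ker (d k)) := rfl
  omega

theorem rank_r [∀ i, FiniteDimensional ℝ (A i)] (ℓ : ℤ) (φ : ∀ i, A i →ₗ[ℝ] A (i + ℓ))
    (m q k : ℤ) (h : m + ℓ = q) (hk : k + 1 = q) :
    finrank ℝ (range ((lcast A hk).comp (d k)) ⊔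
      Submodule.map ((lcast A h).comp (φ m)) (ker (d m)) : Submodule ℝ (A q)) =
      finrank ℝ (range (d k)) + rnum A d ℓ φ m := by
  subst h
  obtain rfl : k = m + ℓ - 1 := by omega
  have h1 := finrank_quot_sup (Submodule.map (φ m) (cocycles A d m)) (cobound A d (m + ℓ))
  have h3 : finrank ℝ (cobound A d (m + ℓ)) = finrank ℝ (range (d (m + ℓ - 1))) :=
    rank_lcast A _ _
  rw [h3] at h1
  exact h1.symm.trans (add_comm _ _)

theorem rank_tri {U V X Y : Type} [AddCommGroup U] [Module ℝ U] [AddCommGroup V] [Module ℝ V]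
    [AddCommGroup X] [Module ℝ X] [AddCommGroup Y] [Module ℝ Y]
    [FiniteDimensional ℝ X] [FiniteDimensional ℝ Y]
    (D : U × V →ₗ[ℝ] X × Y) (f : U →ₗ[ℝ] X) (g : V →ₗ[ℝ] X) (h : V →ₗ[ℝ] Y)
    (hD : ∀ u v, D (u, v) = (f u + g v, h v)) :
    finrank ℝ (range D) = finrank ℝ (range f ⊔ Submodule.map g (ker h) : Submodule ℝ X)
      + finrank ℝ (range h) := by
  have h1 := LinearMap.finrank_range_add_finrank_ker ((LinearMap.snd ℝ X Y).domRestrict (range D))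
  have h2 : range ((LinearMap.snd ℝ X Y).domRestrict (range D)) = range h := by
    ext y
    constructor
    · rintro ⟨⟨_, ⟨⟨u, v⟩, rfl⟩⟩, rfl⟩
      exact ⟨v, by simp [hD]⟩
    · rintro ⟨v, rfl⟩
      exact ⟨⟨D (0, v), ⟨_, rfl⟩⟩, by simp [hD]⟩
  have h3 : finrank ℝ (ker ((LinearMap.snd ℝ X Y).domRestrict (range D))) =
      finrank ℝ (range f ⊔ Submodule.map g (ker h) : Submodule ℝ X) := by
    let F := ((LinearMap.fst ℝ X Y).comp (range D).subtype).comp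
      (ker ((LinearMap.snd ℝ X Y).domRestrict (range D))).subtype
    have hF : Function.Injective F := by
      rintro ⟨⟨⟨x, y⟩, hx⟩, hy⟩ ⟨⟨⟨x', y'⟩, hx'⟩, hy'⟩ hxx
      simp [F] at hy hy' hxx
      simp [hy, hy', hxx]
    have hR : range F = range f ⊔ Submodule.map g (ker h) := by
      ext x
      rw [Submodule.mem_sup]
      constructor
      · rintro ⟨⟨⟨_, ⟨⟨u, v⟩, rfl⟩⟩, hy⟩, rfl⟩
        simp [hD] at hy
        exact ⟨f u, ⟨u, rfl⟩, g v, ⟨v, hy, rfl⟩, by simp [F, hD]⟩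
      · rintro ⟨_, ⟨u, rfl⟩, _, ⟨v, hv, rfl⟩, rfl⟩
        have hv' : h v = 0 := hv
        exact ⟨⟨⟨D (u, v), ⟨_, rfl⟩⟩, by simp [hD, hv']⟩, by simp [F, hD]⟩
    rw [← hR, LinearMap.finrank_range_of_inj hF]
  rw [h2, h3] at h1
  omega

theorem coneD_apply (φ : ∀ i, A i →ₗ[ℝ] A (i + 2)) (i : ℤ) (a : A i) (b : A (i - 2 + 1)) :
    coneD A d 2 φ i (a, b) =
      (d i a + lcast A (show i - 2 + 1 + 2 = i + 1 by ring) (φ (i - 2 + 1) b),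
        - lcast A (show i - 2 + 1 + 1 = i + 1 - 2 + 1 by ring) (d (i - 2 + 1) b)) := by
  norm_num [coneD]

theorem coneD_sq (hd : ∀ i, (d (i + 1)).comp (d i) = 0) (φ : ∀ i, A i →ₗ[ℝ] A (i + 2))
    (hφ : ∀ i, (d (i + 2)).comp (φ i) =
      ((-1 : ℝ) ^ (2 : ℤ)) • (lcast A (show i + 1 + 2 = i + 2 + 1 by ring)).comp
        ((φ (i + 1)).comp (d i))) (i : ℤ) :
    (coneD A d 2 φ (i + 1)).comp (coneD A d 2 φ i) = 0 := by
  have hd' : ∀ i x, d (i + 1) (d i x) = 0 := fun i x => congrArg (fun f => f x) (hd i)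
  have hφ' : ∀ i x, d (i + 2) (φ i x) =
      lcast A (show i + 1 + 2 = i + 2 + 1 by ring) (φ (i + 1) (d i x)) := fun i x => by
    have := congrArg (fun f => f x) (hφ i)
    simpa using this
  refine LinearMap.ext fun ⟨a, b⟩ => ?_
  rw [comp_apply, coneD_apply, coneD_apply]
  simp only [map_add, map_neg, hd', fam_lcast A 1 d, fam_lcast A 2 φ, hφ', lcast_lcast, map_zero,
    neg_zero, zero_add, add_neg_cancel]
  rfl

theorem coneD_rank [∀ i, FiniteDimensional ℝ (A i)] (φ : ∀ i, A i →ₗ[ℝ] A (i + 2)) (i j : ℤ)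
    (hj : i - 2 + 1 = j) :
    finrank ℝ (range (coneD A d 2 φ i)) =
      finrank ℝ (range (d i)) + rnum A d 2 φ j + finrank ℝ (range (d j)) := by
  subst hj
  have h1 := rank_tri (coneD A d 2 φ i) (d i)
    ((lcast A (show i - 2 + 1 + 2 = i + 1 by ring)).comp (φ (i - 2 + 1)))
    ((lcast A (show i - 2 + 1 + 1 = i + 1 - 2 + 1 by ring)).comp (-(d (i - 2 + 1))))
    (fun a b => by rw [coneD_apply]; simp)
  have h2 := rank_r A d 2 φ (i - 2 + 1) (i + 1) i (by ring) rfl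
  have h3 : ker ((lcast A (show i - 2 + 1 + 1 = i + 1 - 2 + 1 by ring)).comp (-(d (i - 2 + 1)))) =
      ker (d (i - 2 + 1)) := by
    rw [LinearMap.ker_comp_of_ker_eq_bot _ (LinearMap.ker_eq_bot.mpr (lcast_inj A _))]
    ext x; simp
  rw [lcast_rfl, LinearMap.id_comp] at h2
  rw [h3, h2, rank_lcast, LinearMap.range_neg] at h1
  exact h1

theorem bphi_eq [∀ i, FiniteDimensional ℝ (A i)]
    (hd : ∀ i, (d (i + 1)).comp (d i) = 0) (φ : ∀ i, A i →ₗ[ℝ] A (i + 2))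
    (hφ : ∀ i, (d (i + 2)).comp (φ i) =
      ((-1 : ℝ) ^ (2 : ℤ)) • (lcast A (show i + 1 + 2 = i + 2 + 1 by ring)).comp
        ((φ (i + 1)).comp (d i))) (k : ℤ) :
    (bphi A d 2 φ k : ℤ) = ((bnum A d k : ℤ) - rnum A d 2 φ (k - 1)) +
      ((bnum A d (k - 1) : ℤ) - rnum A d 2 φ (k - 1 - 1)) := by
  have h1 := hcoh_dim (fun i => A i × A (i - 2 + 1)) (coneD A d 2 φ) (coneD_sq A d hd φ hφ) k
  have h2 := hcoh_dim A d hd k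
  have h3 := hcoh_dim A d hd (k - 1)
  have h4 := coneD_rank A d φ k (k - 1) (by ring)
  have h5 := coneD_rank A d φ (k - 1) (k - 1 - 1) (by ring)
  have h6 : finrank ℝ (A k × A (k - 2 + 1)) = finrank ℝ (A k) + finrank ℝ (A (k - 1)) := by
    rw [Module.finrank_prod, show k - 2 + 1 = k - 1 by ring]
  unfold bphi bnum
  omega

end Helpers

end ConeMorse

/-- STATEMENT 15: if `ℓ = 2`, then for every integer `j ≥ 1`, the alternating sum of the
cone cohomology dimensions telescopes: `Σ_{k=0}^{j} (−1)^{j−k} b^φ_k = b_j − r_{j−1}`. -/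
theorem alternating_sum_telescopes_two_form
    (n ℓ : ℤ) (hn : 0 ≤ n) (hℓ : 1 ≤ ℓ)
    (C : ℤ → Type) [∀ i, AddCommGroup (C i)] [∀ i, Module ℝ (C i)]
    [∀ i, FiniteDimensional ℝ (C i)]
    (hC : ∀ i, i < 0 ∨ n < i → Subsingleton (C i))
    (d : ∀ i, C i →ₗ[ℝ] C (i + 1))
    (hd : ∀ i, (d (i + 1)).comp (d i) = 0)
    (φ : ∀ i, C i →ₗ[ℝ] C (i + ℓ))
    (hφ : ∀ i, (d (i + ℓ)).comp (φ i) =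
      ((-1 : ℝ) ^ ℓ) • (lcast C (show i + 1 + ℓ = i + ℓ + 1 by ring)).comp
        ((φ (i + 1)).comp (d i)))
    (hl2 : ℓ = 2) :
    ∀ j : ℕ, 1 ≤ j →
      ∑ k ∈ Finset.range (j + 1), (-1 : ℤ) ^ (j - k) * (bphi C d ℓ φ (k : ℤ) : ℤ) =
        (bnum C d (j : ℤ) : ℤ) - rnum C d ℓ φ ((j : ℤ) - 1) := by
  subst hl2
  have hb := bphi_eq C d hd φ hφ
  have hs : ∀ i : ℤ, i < 0 → bnum C d i = 0 ∧ rnum C d 2 φ i = 0 := by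
    intro i hi
    have h0 := hC i (Or.inl hi)
    constructor
    · exact finrank_zero_of_subsingleton
    · have : Subsingleton (Submodule.map (φ i) (cocycles C d i)) := by
        refine ⟨?_⟩
        rintro ⟨_, x, hx, rfl⟩ ⟨_, y, hy, rfl⟩
        exact Subtype.ext (congrArg (φ i) (Subsingleton.elim x y))
      exact finrank_zero_of_subsingleton
  intro j _
  induction j with
  | zero => omega
  | succ j ih =>
    have ih' : ∑ k ∈ Finset.range (j + 1), (-1 : ℤ) ^ (j - k) * (bphi C d 2 φ (k : ℤ) : ℤ) =
        (bnum C d (j : ℤ) : ℤ) - rnum C d 2 φ ((j : ℤ) - 1) := by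
      rcases Nat.eq_zero_or_pos j with rfl | hj
      · have h1 := hb 0
        have h2 := hs (0 - 1) (by norm_num)
        have h3 := hs (0 - 1 - 1) (by norm_num)
        simp only [zero_add, Finset.sum_range_one, Nat.cast_zero, Nat.sub_self, pow_zero, one_mul]
        omega
      · exact ih hj
    rw [Finset.sum_range_succ]
    have h4 : ∑ k ∈ Finset.range (j + 1), (-1 : ℤ) ^ (j + 1 - k) * (bphi C d 2 φ (k : ℤ) : ℤ) =
        - ∑ k ∈ Finset.range (j + 1), (-1 : ℤ) ^ (j - k) * (bphi C d 2 φ (k : ℤ) : ℤ) := by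
      rw [← Finset.sum_neg_distrib]
      refine Finset.sum_congr rfl fun k hk => ?_
      have : k ≤ j := by simpa [Nat.lt_succ_iff] using hk
      rw [Nat.succ_sub this, pow_succ]
      ring
    rw [h4, ih', hb]
    have e : ((j + 1 : ℕ) : ℤ) - 1 = j := by push_cast; ring
    rw [e, Nat.sub_self, pow_zero]
    ring
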